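/- Let 0 < a < 1 < A and let u be a radial non-increasing weight on 𝔻 satisfying (LOG 1) and (LOG 2) with constants a, A. Let f be holomorphic on 𝔻 with u(z)|f(z)| ≤ 1 for all z ∈ 𝔻. Then for every integer t ≥ 0 and every z ∈ 𝔻 with |z| ≥ r_t, one has Σ_{κ=1}^{t+1} |f(r_{κ+1}z) − f(r_κ z)| ≤ 2A²·(1/(1−a) + A²)/u(z). -/

import Mathlib

noncomputable section

open Complex

/-- The open unit disc in ℂ. -/
def uD : Set ℂ := {z : ℂ | ‖z‖ < 1}

/-- Holomorphic on the unit disc. -/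
def Holo (f : ℂ → ℂ) : Prop := DifferentiableOn ℂ f uD

/-- A weight on 𝔻: continuous and strictly positive. -/
def IsWeight (v : ℂ → ℝ) : Prop :=
  ContinuousOn v uD ∧ ∀ z ∈ uD, 0 < v z

/-- Radial weight. -/
def Radial (v : ℂ → ℝ) : Prop :=
  ∀ z ∈ uD, ∀ w ∈ uD, ‖z‖ = ‖w‖ → v z = v w

/-- Non-increasing in the modulus. -/
def NonInc (v : ℂ → ℝ) : Prop :=
  ∀ z ∈ uD, ∀ w ∈ uD, ‖z‖ ≤ ‖w‖ → v w ≤ v z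

/-- r₀ = 0, r_κ = 1 - 2^(-2^κ) for κ ≥ 1. -/
def rseq (κ : ℕ) : ℝ := if κ = 0 then 0 else 1 - 1 / 2 ^ (2 ^ κ)

/-- Condition (LOG 1) for a single radial weight. -/
def Log1 (A : ℝ) (v : ℂ → ℝ) : Prop :=
  ∀ κ : ℕ, v (rseq κ : ℂ) ≤ A * v (rseq (κ + 1) : ℂ)

/-- Condition (LOG 2) for a single radial weight. -/
def Log2 (a : ℝ) (v : ℂ → ℝ) : Prop :=
  ∀ κ : ℕ, v (rseq (κ + 1) : ℂ) ≤ a * v (rseq κ : ℂ)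

/-- The weight tends to 0 as |z| → 1. -/
def VanishAtOne (v : ℂ → ℝ) : Prop :=
  ∀ ε > 0, ∃ r : ℝ, r < 1 ∧ ∀ z ∈ uD, r ≤ ‖z‖ → v z ≤ ε

/-- Associated growth function w~ of a growth condition w. -/
def growthTilde (w : ℂ → ℝ) (z : ℂ) : ℝ :=
  sSup {t : ℝ | ∃ g : ℂ → ℂ, Holo g ∧ (∀ x ∈ uD, ‖g x‖ ≤ w x) ∧ t = ‖g z‖}

/-- Associated weight ṽ = 1/(1/v)~. -/
def assocWeight (v : ℂ → ℝ) (z : ℂ) : ℝ := (growthTilde (fun x => 1 / v x) z)⁻¹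

/-- Monotonicity of the double sequence: decreasing in n, increasing in N. -/
def MonoSeq (a : ℕ → ℕ → ℂ → ℝ) : Prop :=
  ∀ N n, ∀ z ∈ uD, a N (n + 1) z ≤ a N n z ∧ a N n z ≤ a (N + 1) n z

/-- Condition (LOG) for a double sequence with constants 0 < a < 1 < A. -/
def SeqLOG (aa A : ℝ) (a : ℕ → ℕ → ℂ → ℝ) : Prop :=
  ∀ N n, Radial (a N n) ∧ NonInc (a N n) ∧ VanishAtOne (a N n) ∧
    Log1 A (a N n) ∧ Log2 aa (a N n)

/-- Condition (Q). -/
def CondQ (a : ℕ → ℕ → ℂ → ℝ) : Prop :=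
  ∀ N, ∃ M ≥ N, ∃ n, ∀ K ≥ M, ∀ m, ∀ ε > 0, ∃ k, ∃ S > 0,
    ∀ z ∈ uD, 1 / a M m z ≤ max (ε / a N n z) (S / a K k z)

/-- Condition (wQ). -/
def CondwQ (a : ℕ → ℕ → ℂ → ℝ) : Prop :=
  ∀ N, ∃ M ≥ N, ∃ n, ∀ K ≥ M, ∀ m, ∃ k, ∃ S > 0,
    ∀ z ∈ uD, 1 / a M m z ≤ max (S / a N n z) (S / a K k z)

/-- Condition (Q)~. -/
def CondQTilde (a : ℕ → ℕ → ℂ → ℝ) : Prop :=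
  ∀ N, ∃ M ≥ N, ∃ n, ∀ K ≥ M, ∀ m, ∀ ε > 0, ∃ k, ∃ S > 0,
    ∀ z ∈ uD, growthTilde (fun x => 1 / a M m x) z ≤
      growthTilde (fun x => max (ε / a N n x) (S / a K k x)) z

/-- Pointwise maximum max_{N=1,…,L} a_{N,n(N)}. -/
def finMax (a : ℕ → ℕ → ℂ → ℝ) (nn : ℕ → ℕ) (L : ℕ) (z : ℂ) : ℝ :=
  sSup {t : ℝ | ∃ N, 1 ≤ N ∧ N ≤ L ∧ t = a N (nn N) z}

/-- Condition (B). -/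
def CondB (a : ℕ → ℕ → ℂ → ℝ) : Prop :=
  ∀ nn : ℕ → ℕ, ∃ m, ∀ M, ∃ L, 1 ≤ L ∧ ∃ c > 0,
    ∀ z ∈ uD, a M m z ≤ c * finMax a nn L z

/-- Condition (B)~. -/
def CondBTilde (a : ℕ → ℕ → ℂ → ℝ) : Prop :=
  ∀ nn : ℕ → ℕ, ∃ m, ∀ M, ∃ L, 1 ≤ L ∧ ∃ c > 0,
    ∀ z ∈ uD, assocWeight (a M m) z ≤ c * assocWeight (finMax a nn L) z

/-- A weight is essential. -/
def Essential (v : ℂ → ℝ) : Prop :=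
  ∃ C > 0, ∀ z ∈ uD,
    growthTilde (fun x => 1 / v x) z ≤ 1 / v z ∧
    1 / v z ≤ C * growthTilde (fun x => 1 / v x) z

/-- Condition (Σ). -/
def CondSigma (a : ℕ → ℕ → ℂ → ℝ) : Prop :=
  ∀ N, ∃ K ≥ N, ∀ k, ∃ n ≥ k, ∀ ε > 0, ∃ Q : Set ℂ,
    IsCompact Q ∧ Q ⊆ uD ∧ ∀ z ∈ uD \ Q, a N n z / a K k z ≤ ε

/-- The Banach space Ha(𝔻) as a set of functions. -/
def HaSet (v : ℂ → ℝ) : Set (ℂ → ℂ) :=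
  {f | Holo f ∧ ∃ C : ℝ, ∀ z ∈ uD, v z * ‖f z‖ ≤ C}

/-!
Let `|z| < 1` and `u |f| ≤ C`. Since `u` is non-increasing, `|f|` is at most `C / u(r_{κ+2})` at
both `r_{κ+2} z` and `r_{κ+1} z`, and two applications of (LOG 1) turn this into `A² C / u(r_κ)`.
By (LOG 2) the numbers `1 / u(r_κ)` grow at least geometrically with ratio `1 / a`, so their sum
over `κ ≤ t` is at most `1 / (1 - a)` times the last one, and `1 / u(r_t) ≤ 1 / u(z)` as soon as
`r_t ≤ |z|`.
-/

theorem inv_le_mul_inv_of_le_mul {K : Type*} [Field K] [LinearOrder K] [IsStrictOrderedRing K]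
    {x y c : K} (hx : 0 < x) (hy : 0 < y) (h : x ≤ c * y) : y⁻¹ ≤ c * x⁻¹ := by
  rwa [← div_eq_mul_inv, le_div_iff₀ hx, inv_mul_le_iff₀ hy, mul_comm]

theorem one_sub_mul_sum_range_le_of_le_mul_succ {R : Type*} [CommRing R] [LinearOrder R]
    [IsStrictOrderedRing R] {a : R} {x : ℕ → R} (ha : 0 ≤ a) (hx₀ : 0 ≤ x 0)
    (hx : ∀ k, x k ≤ a * x (k + 1)) (n : ℕ) :
    (1 - a) * ∑ k ∈ Finset.range (n + 1), x k ≤ x n := by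
  induction n with
  | zero => simpa [sub_mul] using mul_nonneg ha hx₀
  | succ n ih =>
    rw [Finset.sum_range_succ, mul_add]
    linarith [hx n]

theorem rseq_nonneg (κ : ℕ) : 0 ≤ rseq κ := by
  unfold rseq
  split_ifs
  · rfl
  · rw [sub_nonneg, div_le_one (by positivity)]
    exact one_le_pow₀ one_le_two

theorem rseq_lt_one (κ : ℕ) : rseq κ < 1 := by
  unfold rseq
  split_ifs
  · exact one_pos
  · exact sub_lt_self 1 (by positivity)

theorem rseq_monotone : Monotone rseq := by
  refine monotone_nat_of_le_succ fun κ ↦ ?_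
  rcases eq_or_ne κ 0 with rfl | hκ
  · simpa [rseq] using rseq_nonneg 1
  · simp only [rseq, hκ, κ.succ_ne_zero, if_false]
    gcongr <;> simp

theorem norm_ofReal_rseq (κ : ℕ) : ‖(rseq κ : ℂ)‖ = rseq κ := by
  rw [Complex.norm_real, Real.norm_of_nonneg (rseq_nonneg κ)]

theorem ofReal_rseq_mem_uD (κ : ℕ) : (rseq κ : ℂ) ∈ uD :=
  (norm_ofReal_rseq κ).trans_lt (rseq_lt_one κ)

theorem norm_ofReal_rseq_mul_le {z : ℂ} (hz : z ∈ uD) (κ : ℕ) : ‖(rseq κ : ℂ) * z‖ ≤ rseq κ := by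
  rw [norm_mul, norm_ofReal_rseq]
  exact mul_le_of_le_one_right (rseq_nonneg κ) (le_of_lt hz)

section WeightedBound

variable {u : ℂ → ℝ}

theorem Log1.inv_le {A : ℝ} (hl : Log1 A u) (hu : ∀ z ∈ uD, 0 < u z) (κ : ℕ) :
    (u (rseq (κ + 1)))⁻¹ ≤ A * (u (rseq κ))⁻¹ :=
  inv_le_mul_inv_of_le_mul (hu _ (ofReal_rseq_mem_uD _)) (hu _ (ofReal_rseq_mem_uD _)) (hl κ)

theorem Log1.inv_le_sq {A : ℝ} (hl : Log1 A u) (hu : ∀ z ∈ uD, 0 < u z) (κ : ℕ) :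
    (u (rseq (κ + 2)))⁻¹ ≤ A ^ 2 * (u (rseq κ))⁻¹ := by
  have hpos (k : ℕ) : 0 < u (rseq k) := hu _ (ofReal_rseq_mem_uD k)
  have hA : 0 ≤ A := (pos_of_mul_pos_left ((hpos 0).trans_le (hl 0)) (hpos 1).le).le
  calc (u (rseq (κ + 2)))⁻¹ ≤ A * (u (rseq (κ + 1)))⁻¹ := hl.inv_le hu (κ + 1)
    _ ≤ A * (A * (u (rseq κ))⁻¹) := by gcongr; exact hl.inv_le hu κ
    _ = A ^ 2 * (u (rseq κ))⁻¹ := by ring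

theorem Log2.inv_le {a : ℝ} (hl : Log2 a u) (hu : ∀ z ∈ uD, 0 < u z) (κ : ℕ) :
    (u (rseq κ))⁻¹ ≤ a * (u (rseq (κ + 1)))⁻¹ :=
  inv_le_mul_inv_of_le_mul (hu _ (ofReal_rseq_mem_uD _)) (hu _ (ofReal_rseq_mem_uD _)) (hl κ)

theorem Log2.sum_inv_le {a : ℝ} (hl : Log2 a u) (hu : ∀ z ∈ uD, 0 < u z) (ha : a < 1) (t : ℕ) :
    ∑ κ ∈ Finset.range (t + 1), (u (rseq κ))⁻¹ ≤ (1 - a)⁻¹ * (u (rseq t))⁻¹ := by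
  have hpos (k : ℕ) : 0 < u (rseq k) := hu _ (ofReal_rseq_mem_uD k)
  have ha₀ : 0 ≤ a := (pos_of_mul_pos_left ((hpos 1).trans_le (hl 0)) (hpos 0).le).le
  rw [le_inv_mul_iff₀ (sub_pos.2 ha)]
  exact one_sub_mul_sum_range_le_of_le_mul_succ ha₀ (inv_nonneg.2 (hpos 0).le) (hl.inv_le hu) t

variable {E : Type*} [SeminormedAddCommGroup E] {f : ℂ → E} {C : ℝ}

theorem NonInc.norm_le_mul_inv (hni : NonInc u) (hf : ∀ z ∈ uD, u z * ‖f z‖ ≤ C) {z w : ℂ}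
    (hz : z ∈ uD) (hw : w ∈ uD) (huw : 0 < u w) (hzw : ‖z‖ ≤ ‖w‖) : ‖f z‖ ≤ C * (u w)⁻¹ := by
  rw [← div_eq_mul_inv, le_div_iff₀' huw]
  calc u w * ‖f z‖ ≤ u z * ‖f z‖ := by gcongr; exact hni z hz w hw hzw
    _ ≤ C := hf z hz

theorem NonInc.norm_apply_rseq_mul_le (hni : NonInc u) (hu : ∀ z ∈ uD, 0 < u z)
    (hf : ∀ z ∈ uD, u z * ‖f z‖ ≤ C) {z : ℂ} (hz : z ∈ uD) {j k : ℕ} (hjk : j ≤ k) :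
    ‖f (rseq j * z)‖ ≤ C * (u (rseq k))⁻¹ := by
  have hnorm : ‖(rseq j : ℂ) * z‖ ≤ rseq j := norm_ofReal_rseq_mul_le hz j
  refine hni.norm_le_mul_inv hf (hnorm.trans_lt (rseq_lt_one j)) (ofReal_rseq_mem_uD k)
    (hu _ (ofReal_rseq_mem_uD k)) ?_
  rw [norm_ofReal_rseq]
  exact hnorm.trans (rseq_monotone hjk)

theorem NonInc.norm_apply_rseq_mul_sub_le {A : ℝ} (hni : NonInc u) (hl : Log1 A u)
    (hu : ∀ z ∈ uD, 0 < u z) (hf : ∀ z ∈ uD, u z * ‖f z‖ ≤ C) {z : ℂ} (hz : z ∈ uD) (κ : ℕ) :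
    ‖f (rseq (κ + 2) * z) - f (rseq (κ + 1) * z)‖ ≤ 2 * A ^ 2 * C * (u (rseq κ))⁻¹ := by
  have hC : 0 ≤ C := (mul_nonneg (hu z hz).le (norm_nonneg _)).trans (hf z hz)
  calc ‖f (rseq (κ + 2) * z) - f (rseq (κ + 1) * z)‖
      ≤ C * (u (rseq (κ + 2)))⁻¹ + C * (u (rseq (κ + 2)))⁻¹ :=
        norm_sub_le_of_le (hni.norm_apply_rseq_mul_le hu hf hz le_rfl)
          (hni.norm_apply_rseq_mul_le hu hf hz (κ + 1).le_succ)
    _ = 2 * C * (u (rseq (κ + 2)))⁻¹ := by ring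
    _ ≤ 2 * C * (A ^ 2 * (u (rseq κ))⁻¹) := by gcongr; exact hl.inv_le_sq hu κ
    _ = 2 * A ^ 2 * C * (u (rseq κ))⁻¹ := by ring

theorem head_sum_estimate_general {a A : ℝ} (ha : a < 1) (hu : ∀ z ∈ uD, 0 < u z)
    (hni : NonInc u) (hl1 : Log1 A u) (hl2 : Log2 a u) (hf : ∀ z ∈ uD, u z * ‖f z‖ ≤ C)
    (t : ℕ) {z : ℂ} (hz : z ∈ uD) (htz : rseq t ≤ ‖z‖) :
    ∑ κ ∈ Finset.Icc 1 (t + 1), ‖f (rseq (κ + 1) * z) - f (rseq κ * z)‖ ≤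
      2 * A ^ 2 * C * (1 / (1 - a)) / u z := by
  have hC : 0 ≤ C := (mul_nonneg (hu z hz).le (norm_nonneg _)).trans (hf z hz)
  have hut : u z ≤ u (rseq t) :=
    hni _ (ofReal_rseq_mem_uD t) z hz ((norm_ofReal_rseq t).trans_le htz)
  calc ∑ κ ∈ Finset.Icc 1 (t + 1), ‖f (rseq (κ + 1) * z) - f (rseq κ * z)‖
      = ∑ κ ∈ Finset.range (t + 1), ‖f (rseq (κ + 2) * z) - f (rseq (κ + 1) * z)‖ := by
        rw [← Finset.Ico_add_one_right_eq_Icc, Finset.range_eq_Ico]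
        exact (Finset.sum_Ico_add' _ 0 (t + 1) 1).symm
    _ ≤ ∑ κ ∈ Finset.range (t + 1), 2 * A ^ 2 * C * (u (rseq κ))⁻¹ :=
        Finset.sum_le_sum fun κ _ ↦ hni.norm_apply_rseq_mul_sub_le hl1 hu hf hz κ
    _ = 2 * A ^ 2 * C * ∑ κ ∈ Finset.range (t + 1), (u (rseq κ))⁻¹ := (Finset.mul_sum ..).symm
    _ ≤ 2 * A ^ 2 * C * ((1 - a)⁻¹ * (u (rseq t))⁻¹) := by gcongr; exact hl2.sum_inv_le hu ha t
    _ ≤ 2 * A ^ 2 * C * ((1 - a)⁻¹ * (u z)⁻¹) := by gcongr; exact hu z hz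
    _ = 2 * A ^ 2 * C * (1 / (1 - a)) / u z := by ring

end WeightedBound

/-- head sum estimate
Σ_{κ=1}^{t+1} |f(r_{κ+1}z) − f(r_κ z)| ≤ 2A²(1/(1−a) + A²)/u(z) for |z| ≥ r_t. -/
theorem head_sum_estimate (a' A : ℝ) (ha0 : 0 < a') (ha1 : a' < 1) (hA : 1 < A)
    (u : ℂ → ℝ) (hw : IsWeight u) (hrad : Radial u) (hni : NonInc u)
    (hl1 : Log1 A u) (hl2 : Log2 a' u)
    (f : ℂ → ℂ) (hf : Holo f) (hbd : ∀ z ∈ uD, u z * ‖f z‖ ≤ 1) :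
    ∀ t : ℕ, ∀ z ∈ uD, rseq t ≤ ‖z‖ →
      ∑ κ ∈ Finset.Icc 1 (t + 1),
          ‖f ((rseq (κ + 1) : ℂ) * z) - f ((rseq κ : ℂ) * z)‖ ≤
        2 * A ^ 2 * (1 / (1 - a') + A ^ 2) / u z := by
  intro t z hz htz
  have huz : 0 < u z := hw.2 z hz
  exact (head_sum_estimate_general ha1 hw.2 hni hl1 hl2 hbd t hz htz).trans
    (by rw [mul_one]; gcongr; exact le_add_of_nonneg_right (sq_nonneg A))
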